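/- Suppose g(r) = o(r^{-c}) as r → ∞ for some c > d. For b ∈ ℝ define r_n(b) by r_n(b)^d = (log n + b)/(α n) (for n large enough that this is positive). Then E[W_n(r_n(b))] → e^{-b} as n → ∞. -/

import Mathlib

open MeasureTheory ProbabilityTheory Filter Set

noncomputable section

namespace RCM

/-- The toroidal metric on the unit cube. -/
def torusDist {d : ℕ} (x y : EuclideanSpace ℝ (Fin d)) : ℝ :=
  ⨅ z : Fin d → ℤ, ‖x - y - (WithLp.equiv 2 (Fin d → ℝ)).symm (fun i => (z i : ℝ))‖

/-- The half-open unit cube `S = (-1/2, 1/2]^d`. -/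
def cube (d : ℕ) : Set (EuclideanSpace ℝ (Fin d)) :=
  {x | ∀ i, x i ∈ Set.Ioc (-(1/2) : ℝ) (1/2)}

/-- The random connection model: i.i.d. uniform points `X`, coupled Poisson counts `N`,
i.i.d. uniform edge variables `U`, with the three families mutually independent, and a
non-increasing connection function `g : [0,∞) → [0,1]` with finite positive integral `α`. -/
structure Model (d : ℕ) {Ω : Type*} [MeasurableSpace Ω] (P : Measure Ω) where
  g : ℝ → ℝ
  α : ℝ
  X : ℕ → Ω → EuclideanSpace ℝ (Fin d)
  N : ℕ → Ω → ℕ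
  U : ℕ → ℕ → Ω → ℝ
  g_antitone : AntitoneOn g (Set.Ici 0)
  g_mem : ∀ r : ℝ, 0 ≤ r → g r ∈ Set.Icc (0 : ℝ) 1
  g_integrable : MeasureTheory.Integrable (fun x : EuclideanSpace ℝ (Fin d) => g ‖x‖)
  α_def : α = ∫ x : EuclideanSpace ℝ (Fin d), g ‖x‖
  α_pos : 0 < α
  X_meas : ∀ i, Measurable (X i)
  X_unif : ∀ i : ℕ, 1 ≤ i → Measure.map (X i) P = volume.restrict (cube d)
  X_indep : iIndepFun
    (fun i : {i : ℕ // 1 ≤ i} => X i) P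
  N_meas : ∀ n, Measurable (N n)
  N_mono : ∀ ω, Monotone fun n => N n ω
  N_poisson : ∀ n k : ℕ,
    P {ω | N n ω = k} = ENNReal.ofReal (Real.exp (-(n : ℝ)) * (n : ℝ) ^ k / k.factorial)
  U_meas : ∀ i j, Measurable (U i j)
  U_unif : ∀ i j : ℕ, 1 ≤ i → i < j →
    Measure.map (U i j) P = volume.restrict (Set.Icc (0 : ℝ) 1)
  U_indep : iIndepFun
    (fun p : {p : ℕ × ℕ // 1 ≤ p.1 ∧ p.1 < p.2} => U p.1.1 p.1.2) P
  families_indep : iIndep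
    (![MeasurableSpace.comap (fun ω => fun i : ℕ => X i ω) inferInstance,
       MeasurableSpace.comap (fun ω => fun n : ℕ => N n ω) inferInstance,
       MeasurableSpace.comap (fun ω => fun p : ℕ × ℕ => U p.1 p.2 ω) inferInstance]) P

variable {d : ℕ} {Ω : Type*} [MeasurableSpace Ω] {P : Measure Ω}

/-- Adjacency in the graph `G_n(r)`: vertices `1 ≤ i,j ≤ N_n` are joined iff
`U_{ij} ≤ g(dist(X_i,X_j)/r)`. -/
def adj (M : Model d P) (n : ℕ) (r : ℝ) (ω : Ω) (i j : ℕ) : Prop :=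
  i ≠ j ∧ 1 ≤ i ∧ 1 ≤ j ∧ i ≤ M.N n ω ∧ j ≤ M.N n ω ∧
    M.U (min i j) (max i j) ω ≤ M.g (torusDist (M.X i ω) (M.X j ω) / r)

/-- The degree of vertex `i` in `G_n(r)`. -/
def deg (M : Model d P) (n : ℕ) (r : ℝ) (ω : Ω) (i : ℕ) : ℕ :=
  {j : ℕ | adj M n r ω i j}.ncard

/-- `W_n(r)`, the number of isolated vertices of `G_n(r)`. -/
def isolatedCount (M : Model d P) (n : ℕ) (r : ℝ) (ω : Ω) : ℕ :=
  {i : ℕ | 1 ≤ i ∧ i ≤ M.N n ω ∧ deg M n r ω i = 0}.ncard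

/-- The inclusion of the integer lattice into Euclidean space. -/
def latticeHom (d : ℕ) : (Fin d → ℤ) →+ EuclideanSpace ℝ (Fin d) where
  toFun z := (WithLp.equiv 2 (Fin d → ℝ)).symm (fun i => (z i : ℝ))
  map_zero' := by ext i; simp
  map_add' x y := by ext i; simp

@[simp]
lemma latticeHom_apply (z : Fin d → ℤ) (i : Fin d) : latticeHom d z i = z i := rfl

lemma torusDist_eq_iInf (x y : EuclideanSpace ℝ (Fin d)) :
    torusDist x y = ⨅ z, ‖x - y - latticeHom d z‖ := rfl

instance : Countable (latticeHom d).range :=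
  (Set.countable_range (latticeHom d)).to_subtype

lemma measurableSet_cube : MeasurableSet (cube d) := by
  have : cube d = ⋂ i, (fun x : EuclideanSpace ℝ (Fin d) => x i) ⁻¹' Ioc (-(1/2)) (1/2) := by
    ext x; simp [cube]
  rw [this]
  exact MeasurableSet.iInter fun i => measurableSet_Ioc.preimage (by fun_prop)

lemma volume_cube : volume (cube d) = 1 := by
  have hc : cube d = (MeasurableEquiv.toLp 2 (Fin d → ℝ)).symm ⁻¹'
      (Set.univ.pi fun _ => Ioc (-(1/2)) (1/2)) := by
    ext x; simp [cube]
  have h2 := (EuclideanSpace.volume_preserving_symm_measurableEquiv_toLp (Fin d)).measure_preimage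
    (s := Set.univ.pi fun _ => Ioc (-(1/2) : ℝ) (1/2))
    (MeasurableSet.univ_pi fun _ => measurableSet_Ioc).nullMeasurableSet
  rw [hc, h2, Real.volume_pi_Ioc]
  norm_num

instance : IsProbabilityMeasure (volume.restrict (cube d)) :=
  ⟨by rw [Measure.restrict_apply_univ, volume_cube]⟩

lemma isAddFundamentalDomain_cube :
    IsAddFundamentalDomain (latticeHom d).range (cube d) volume := by
  refine IsAddFundamentalDomain.mk' measurableSet_cube.nullMeasurableSet fun x => ?_
  have h (i : Fin d) : ∃! m : ℤ, x i + m ∈ Ioc (-(1/2) : ℝ) (1/2) := by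
    have := existsUnique_add_zsmul_mem_Ioc (zero_lt_one (α := ℝ)) (x i) (-(1/2))
    norm_num at this ⊢
    exact this
  choose m hm hu using h
  refine ⟨⟨latticeHom d m, m, rfl⟩, fun i => ?_, ?_⟩
  · simpa [AddSubgroup.vadd_def, add_comm] using hm i
  · rintro ⟨_, z, rfl⟩ hz
    congr 2
    ext i
    refine hu i (z i) ?_
    simpa [AddSubgroup.vadd_def, add_comm] using hz i

lemma torusDist_nonneg (x y : EuclideanSpace ℝ (Fin d)) : 0 ≤ torusDist x y :=
  Real.iInf_nonneg fun _ => norm_nonneg _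

lemma measurable_torusDist :
    Measurable fun p : EuclideanSpace ℝ (Fin d) × EuclideanSpace ℝ (Fin d) =>
      torusDist p.1 p.2 := by
  refine Measurable.iInf fun z => ?_
  fun_prop

lemma torusDist_add_right (x y t : EuclideanSpace ℝ (Fin d)) :
    torusDist (x + t) (y + t) = torusDist x y := by
  simp [torusDist_eq_iInf]

lemma torusDist_lattice_add (x y : EuclideanSpace ℝ (Fin d)) (w : Fin d → ℤ) :
    torusDist x (latticeHom d w + y) = torusDist x y := by
  simp only [torusDist_eq_iInf]
  rw [← (Equiv.subRight w).iInf_comp]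
  congr! 3 with z
  simp only [Equiv.subRight_apply, map_sub]
  abel

lemma torusDist_zero_of_mem_cube {y : EuclideanSpace ℝ (Fin d)} (hy : y ∈ cube d) :
    torusDist 0 y = ‖y‖ := by
  rw [torusDist_eq_iInf]
  refine le_antisymm ?_ (le_ciInf fun z => ?_)
  · refine (ciInf_le ⟨0, ?_⟩ 0).trans (by simp)
    rintro _ ⟨z, rfl⟩
    exact norm_nonneg _
  · rw [EuclideanSpace.norm_eq, EuclideanSpace.norm_eq]
    refine Real.sqrt_le_sqrt (Finset.sum_le_sum fun i _ => ?_)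
    simp only [Real.norm_eq_abs, sq_abs, PiLp.sub_apply, PiLp.zero_apply, latticeHom_apply]
    obtain ⟨h1, h2⟩ := hy i
    obtain h | h | h : z i ≤ -1 ∨ z i = 0 ∨ 1 ≤ z i := by omega
    · have : (z i : ℝ) ≤ -1 := by exact_mod_cast h
      nlinarith
    · simp [h]
    · have : (1 : ℝ) ≤ z i := by exact_mod_cast h
      nlinarith

open scoped Pointwise in
lemma setLIntegral_cube_torusDist (F : ℝ → ENNReal) (x : EuclideanSpace ℝ (Fin d)) :
    ∫⁻ y in cube d, F (torusDist x y) = ∫⁻ y in cube d, F ‖y‖ := by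
  have hdom := isAddFundamentalDomain_cube (d := d)
  have h1 : ∫⁻ y in cube d, F (torusDist x y) = ∫⁻ y in x +ᵥ cube d, F (torusDist x y) := by
    refine hdom.setLIntegral_eq (hdom.vadd_of_comm x) _ ?_
    rintro ⟨_, z, rfl⟩ y
    change F (torusDist x (latticeHom d z + y)) = _
    rw [torusDist_lattice_add]
  rw [h1]
  have h2 := (measurePreserving_add_left volume x).setLIntegral_comp_preimage_emb
    (measurableEmbedding_addLeft x) (fun y => F (torusDist x y)) (x +ᵥ cube d)
  have h3 : (fun y => x + y) ⁻¹' (x +ᵥ cube d) = cube d := by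
    ext y; simp [Set.mem_vadd_set]
  rw [h3] at h2
  rw [← h2]
  refine setLIntegral_congr_fun measurableSet_cube fun y hy => ?_
  have := torusDist_add_right 0 y x
  simp only [zero_add] at this
  simp only [add_comm x y, this, torusDist_zero_of_mem_cube hy]

lemma half_le_norm_of_notMem_cube {x : EuclideanSpace ℝ (Fin d)} (hx : x ∉ cube d) :
    1 / 2 ≤ ‖x‖ := by
  simp only [cube, mem_ofPred_eq, not_forall] at hx
  obtain ⟨i, hi⟩ := hx
  refine le_trans ?_ (PiLp.norm_apply_le x i)
  rw [Real.norm_eq_abs]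
  by_contra! h
  exact hi ⟨(abs_lt.1 h).1, (abs_lt.1 h).2.le⟩

namespace Model

lemma measurable_g_comp (M : Model d P) {β : Type*} [MeasurableSpace β] {f : β → ℝ}
    (hf : Measurable f) (h0 : ∀ x, 0 ≤ f x) : Measurable fun x => M.g (f x) := by
  have hanti : Antitone fun r : ℝ => M.g (max r 0) := fun a b hab =>
    M.g_antitone (mem_Ici.2 (le_max_right _ _)) (mem_Ici.2 (le_max_right _ _))
      (max_le_max_right 0 hab)
  have := hanti.measurable.comp hf
  simpa only [Function.comp_def, max_eq_left (h0 _)] using this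

/-- The probability that a given point is not joined to an independent uniform point. -/
def nonEdgeProb (M : Model d P) (r : ℝ) : ENNReal :=
  ∫⁻ y in cube d, ENNReal.ofReal (1 - M.g (‖y‖ / r))

/-- The event that vertex `i` is joined to none of the vertices in `J`. -/
def noEdgeEvent (M : Model d P) (r : ℝ) (i : ℕ) (J : Finset ℕ) : Set Ω :=
  {ω | ∀ j ∈ J, M.g (torusDist (M.X i ω) (M.X j ω) / r) < M.U (min i j) (max i j) ω}

lemma measurable_g_torusDist (M : Model d P) {r : ℝ} (hr : 0 < r) {β : Type*} [MeasurableSpace β]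
    {f h : β → EuclideanSpace ℝ (Fin d)} (hf : Measurable f) (hh : Measurable h) :
    Measurable fun x => M.g (torusDist (f x) (h x) / r) :=
  M.measurable_g_comp ((measurable_torusDist.comp (hf.prodMk hh)).div_const r)
    fun _ => div_nonneg (torusDist_nonneg _ _) hr.le

lemma indepFun_X_U (M : Model d P) :
    IndepFun (fun ω (i : ℕ) => M.X i ω) (fun ω (p : ℕ × ℕ) => M.U p.1 p.2 ω) P := by
  rw [IndepFun_iff_Indep]
  exact M.families_indep.indep (i := 0) (j := 2) (by decide)

lemma iIndepFun_X_finset (M : Model d P) (J : Finset ℕ) (hJ : ∀ j ∈ J, 1 ≤ j) :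
    iIndepFun (fun j : J => M.X j) P :=
  M.X_indep.precomp (g := fun j : J => (⟨j, hJ j j.2⟩ : {i : ℕ // 1 ≤ i}))
    fun a b h => Subtype.ext (by simpa using h)

lemma indepFun_X_finset (M : Model d P) {i : ℕ} (hi : 1 ≤ i) {J : Finset ℕ}
    (hJ : ∀ j ∈ J, 1 ≤ j) (hiJ : i ∉ J) :
    IndepFun (M.X i) (fun ω (j : J) => M.X j ω) P := by
  have h := M.X_indep.indepFun_finset {⟨i, hi⟩} (J.subtype (1 ≤ ·))
    (by simpa using hiJ) (fun j => M.X_meas j)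
  exact h.comp (measurable_pi_apply ⟨⟨i, hi⟩, by simp⟩)
    (measurable_pi_lambda (fun v (j : J) => v ⟨⟨j, hJ j j.2⟩, by simp⟩)
      fun j => measurable_pi_apply _)

lemma iIndepFun_U_finset (M : Model d P) {i : ℕ} (hi : 1 ≤ i) {J : Finset ℕ}
    (hJ : ∀ j ∈ J, 1 ≤ j) (hiJ : i ∉ J) :
    iIndepFun (fun j : J => M.U (min i j) (max i j)) P := by
  have hne (j : J) : i ≠ j := fun h => hiJ (h ▸ j.2)
  refine M.U_indep.precomp (g := fun j : J => (⟨(min i j, max i j), ?_⟩ :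
    {p : ℕ × ℕ // 1 ≤ p.1 ∧ p.1 < p.2})) fun a b h => ?_
  · have := hJ j j.2
    have := hne j
    dsimp only
    omega
  · have h1 := congrArg (fun p => p.1.1) h
    have h2 := congrArg (fun p => p.1.2) h
    dsimp only at h1 h2
    exact Subtype.ext (by omega)

lemma map_X_U [IsProbabilityMeasure P] (M : Model d P) {i : ℕ} (hi : 1 ≤ i) {J : Finset ℕ}
    (hJ : ∀ j ∈ J, 1 ≤ j) (hiJ : i ∉ J) :
    P.map (fun ω => ((M.X i ω, fun j : J => M.X j ω), fun j : J => M.U (min i j) (max i j) ω)) =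
      ((volume.restrict (cube d)).prod (P.map fun ω (j : J) => M.X j ω)).prod
        (Measure.pi fun _ : J => volume.restrict (Icc (0 : ℝ) 1)) := by
  have hX := M.X_meas
  have hU := M.U_meas
  have h := M.indepFun_X_U.comp (φ := fun x => (x i, fun j : J => x j))
    (ψ := fun u => fun j : J => u (min i j, max i j)) (by fun_prop) (by fun_prop)
  have h1 := h.map_prod_eq_prod_map_map (by fun_prop) (by fun_prop)
  have h2 := (M.indepFun_X_finset hi hJ hiJ).map_prod_eq_prod_map_map (by fun_prop) (by fun_prop)
  have h3 := (M.iIndepFun_U_finset hi hJ hiJ).map_fun_eq_pi_map (by fun_prop)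
  have h4 (j : J) : P.map (M.U (min i j) (max i j)) = volume.restrict (Icc 0 1) := by
    have : i ≠ j := fun h => hiJ (h ▸ j.2)
    have := hJ j j.2
    exact M.U_unif _ _ (by omega) (by omega)
  simp only [Function.comp_def] at h1
  rw [h1, h2, h3, M.X_unif i hi]
  simp only [h4]

lemma volume_Ioi_g (M : Model d P) {s : ℝ} (hs : 0 ≤ s) :
    volume.restrict (Icc (0 : ℝ) 1) (Ioi (M.g s)) = ENNReal.ofReal (1 - M.g s) := by
  have h := M.g_mem s hs
  rw [Measure.restrict_apply measurableSet_Ioi]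
  have : Ioi (M.g s) ∩ Icc 0 1 = Ioc (M.g s) 1 := by
    ext x
    simp only [mem_inter_iff, mem_Ioi, mem_Icc, mem_Ioc]
    exact ⟨fun hx => ⟨hx.1, hx.2.2⟩, fun hx => ⟨hx.1, h.1.trans hx.1.le, hx.2⟩⟩
  rw [this, Real.volume_Ioc]

lemma measure_noEdgeEvent [IsProbabilityMeasure P] (M : Model d P) {r : ℝ} (hr : 0 < r)
    {i : ℕ} (hi : 1 ≤ i) {J : Finset ℕ} (hJ : ∀ j ∈ J, 1 ≤ j) (hiJ : i ∉ J) :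
    P (M.noEdgeEvent r i J) = M.nonEdgeProb r ^ J.card := by
  have hX := M.X_meas
  have hU := M.U_meas
  set B : Set ((EuclideanSpace ℝ (Fin d) × (J → EuclideanSpace ℝ (Fin d))) × (J → ℝ)) :=
    {p | ∀ j, M.g (torusDist p.1.1 (p.1.2 j) / r) < p.2 j} with hB
  have hBm : MeasurableSet B := by
    have : B = ⋂ j, {p | M.g (torusDist p.1.1 (p.1.2 j) / r) < p.2 j} := by
      ext; simp [hB]
    rw [this]
    exact MeasurableSet.iInter fun j => measurableSet_lt
      (M.measurable_g_torusDist hr (by fun_prop) (by fun_prop)) (by fun_prop)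
  have hh (x : EuclideanSpace ℝ (Fin d)) :
      Measurable fun y => ENNReal.ofReal (1 - M.g (torusDist x y / r)) :=
    (measurable_const.sub (M.measurable_g_torusDist hr measurable_const measurable_id)).ennreal_ofReal
  have hprod : Measurable fun p : EuclideanSpace ℝ (Fin d) × (J → EuclideanSpace ℝ (Fin d)) =>
      ∏ j : J, ENNReal.ofReal (1 - M.g (torusDist p.1 (p.2 j) / r)) :=
    Finset.measurable_prod _ fun j _ => (measurable_const.sub
      (M.measurable_g_torusDist hr (by fun_prop) (by fun_prop))).ennreal_ofReal
  have hinner (x : EuclideanSpace ℝ (Fin d)) :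
      ∫⁻ xs, ∏ j : J, ENNReal.ofReal (1 - M.g (torusDist x (xs j) / r))
        ∂(P.map fun ω (j : J) => M.X j ω) = M.nonEdgeProb r ^ J.card := by
    have hmeas : Measurable fun xs : J → EuclideanSpace ℝ (Fin d) =>
        ∏ j : J, ENNReal.ofReal (1 - M.g (torusDist x (xs j) / r)) :=
      Finset.measurable_prod _ fun j _ => (hh x).comp (measurable_pi_apply j)
    rw [lintegral_map hmeas (by fun_prop)]
    have hind := (M.iIndepFun_X_finset J hJ).comp
      (fun _ y => ENNReal.ofReal (1 - M.g (torusDist x y / r))) fun _ => hh x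
    rw [lintegral_prod_eq_prod_lintegral_of_indepFun Finset.univ
      (fun (j : J) ω => ENNReal.ofReal (1 - M.g (torusDist x (M.X j ω) / r)))
      hind fun j => (hh x).comp (hX j)]
    have hj (j : J) : ∫⁻ ω, ENNReal.ofReal (1 - M.g (torusDist x (M.X j ω) / r)) ∂P =
        M.nonEdgeProb r := by
      rw [← lintegral_map (hh x) (hX j), M.X_unif j (hJ j j.2), nonEdgeProb]
      exact setLIntegral_cube_torusDist (fun s => ENNReal.ofReal (1 - M.g (s / r))) x
    simp [hj]
  have hA : M.noEdgeEvent r i J =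
      (fun ω => ((M.X i ω, fun j : J => M.X j ω), fun j : J => M.U (min i j) (max i j) ω)) ⁻¹' B := by
    ext ω
    simp [noEdgeEvent, hB]
  rw [hA, ← Measure.map_apply (by fun_prop) hBm, M.map_X_U hi hJ hiJ, Measure.prod_apply hBm]
  have hslice (p : EuclideanSpace ℝ (Fin d) × (J → EuclideanSpace ℝ (Fin d))) :
      (Measure.pi fun _ : J => volume.restrict (Icc (0 : ℝ) 1)) (Prod.mk p ⁻¹' B) =
        ∏ j : J, ENNReal.ofReal (1 - M.g (torusDist p.1 (p.2 j) / r)) := by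
    have : Prod.mk p ⁻¹' B = Set.univ.pi fun j => Ioi (M.g (torusDist p.1 (p.2 j) / r)) := by
      ext u; simp [hB]
    rw [this, Measure.pi_pi]
    exact Finset.prod_congr rfl fun j _ =>
      M.volume_Ioi_g (div_nonneg (torusDist_nonneg _ _) hr.le)
  simp only [hslice]
  have := (Measure.isProbabilityMeasure_map (μ := P) (f := fun ω (j : J) => M.X j ω) (by fun_prop))
  rw [lintegral_prod _ hprod.aemeasurable]
  simp only [hinner, lintegral_const, measure_univ, mul_one]

lemma indepFun_X_U_N (M : Model d P) :
    IndepFun (fun ω => (fun i : ℕ => M.X i ω, fun p : ℕ × ℕ => M.U p.1 p.2 ω))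
      (fun ω (n : ℕ) => M.N n ω) P := by
  have hX := M.X_meas
  have hU := M.U_meas
  have hN := M.N_meas
  have hcomap := MeasurableSpace.comap_prodMk (fun ω (i : ℕ) => M.X i ω)
    (fun ω (p : ℕ × ℕ) => M.U p.1 p.2 ω) (mβ := inferInstance) (mγ := inferInstance)
  rw [IndepFun_iff_Indep]
  unfold Prod.instMeasurableSpace
  rw [hcomap]
  have h := indep_iSup_of_disjoint (S := {0, 2}) (T := {1}) ?_ M.families_indep (by simp)
  · simpa [iSup_or, iSup_sup_eq] using h
  · intro i
    fin_cases i
    · exact Measurable.comap_le (by fun_prop)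
    · exact Measurable.comap_le (by fun_prop)
    · exact Measurable.comap_le (by fun_prop)

lemma exists_preimage_noEdgeEvent (M : Model d P) {r : ℝ} (hr : 0 < r) (i : ℕ) (J : Finset ℕ) :
    ∃ B, MeasurableSet B ∧ M.noEdgeEvent r i J =
      (fun ω => (fun i : ℕ => M.X i ω, fun p : ℕ × ℕ => M.U p.1 p.2 ω)) ⁻¹' B := by
  refine ⟨⋂ j ∈ J, {p | M.g (torusDist (p.1 i) (p.1 j) / r) < p.2 (min i j, max i j)},
    J.measurableSet_biInter fun j _ => measurableSet_lt
      (M.measurable_g_torusDist hr (by fun_prop) (by fun_prop)) (by fun_prop), ?_⟩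
  ext ω
  simp [noEdgeEvent]

lemma measurableSet_noEdgeEvent (M : Model d P) {r : ℝ} (hr : 0 < r) (i : ℕ) (J : Finset ℕ) :
    MeasurableSet (M.noEdgeEvent r i J) := by
  have hX := M.X_meas
  have hU := M.U_meas
  obtain ⟨B, hB, h⟩ := M.exists_preimage_noEdgeEvent hr i J
  rw [h]
  exact hB.preimage (by fun_prop)

lemma measure_noEdgeEvent_inter (M : Model d P) {r : ℝ} (hr : 0 < r) (i : ℕ) (J : Finset ℕ)
    (n k : ℕ) :
    P (M.noEdgeEvent r i J ∩ {ω | M.N n ω = k}) =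
      P (M.noEdgeEvent r i J) * P {ω | M.N n ω = k} := by
  obtain ⟨B, hB, h⟩ := M.exists_preimage_noEdgeEvent hr i J
  rw [h]
  exact M.indepFun_X_U_N.measure_inter_preimage_eq_mul B {v | v n = k} hB
    (measurableSet_eq_fun (by fun_prop) (by fun_prop))

lemma measurableSet_N_eq (M : Model d P) (n k : ℕ) : MeasurableSet {ω | M.N n ω = k} :=
  M.N_meas n (measurableSet_singleton k)

lemma deg_eq_zero_iff (M : Model d P) {n : ℕ} {r : ℝ} {ω : Ω} {i : ℕ} (hi : 1 ≤ i)
    (hin : i ≤ M.N n ω) :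
    deg M n r ω i = 0 ↔ ω ∈ M.noEdgeEvent r i ((Finset.Icc 1 (M.N n ω)).erase i) := by
  have hfin : {j | adj M n r ω i j}.Finite :=
    (Set.finite_Iic (M.N n ω)).subset fun j hj => hj.2.2.2.2.1
  rw [deg, Set.ncard_eq_zero hfin, Set.eq_empty_iff_forall_notMem]
  simp only [mem_ofPred_eq, adj, noEdgeEvent, Finset.mem_erase, Finset.mem_Icc]
  refine forall_congr' fun j => ?_
  rw [← not_le]
  constructor
  · rintro h ⟨h1, h2, h3⟩ h4
    exact h ⟨Ne.symm h1, hi, h2, hin, h3, h4⟩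
  · rintro h ⟨h1, -, h2, -, h3, h4⟩
    exact h ⟨Ne.symm h1, h2, h3⟩ h4

lemma isolatedCount_eq_tsum (M : Model d P) (n : ℕ) (r : ℝ) (ω : Ω) :
    (isolatedCount M n r ω : ENNReal) = ∑' k : ℕ, ∑ i ∈ Finset.Icc 1 k,
      (M.noEdgeEvent r i ((Finset.Icc 1 k).erase i) ∩ {ω | M.N n ω = k}).indicator 1 ω := by
  classical
  rw [tsum_eq_single (M.N n ω)]
  · have h : {i : ℕ | 1 ≤ i ∧ i ≤ M.N n ω ∧ deg M n r ω i = 0} =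
        ↑((Finset.Icc 1 (M.N n ω)).filter fun i =>
          ω ∈ M.noEdgeEvent r i ((Finset.Icc 1 (M.N n ω)).erase i)) := by
      ext i
      simp only [mem_ofPred_eq, Finset.coe_filter, Finset.mem_Icc]
      constructor
      · rintro ⟨h1, h2, h3⟩
        exact ⟨⟨h1, h2⟩, (M.deg_eq_zero_iff h1 h2).1 h3⟩
      · rintro ⟨⟨h1, h2⟩, h3⟩
        exact ⟨h1, h2, (M.deg_eq_zero_iff h1 h2).2 h3⟩
    rw [isolatedCount, h, Set.ncard_coe_finset, Finset.card_filter]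
    push_cast
    refine Finset.sum_congr rfl fun i _ => ?_
    simp [Set.indicator_apply]
  · intro k hk
    refine Finset.sum_eq_zero fun i _ => Set.indicator_of_notMem (fun h => hk h.2.symm) _

lemma measurable_isolatedCount (M : Model d P) (n : ℕ) {r : ℝ} (hr : 0 < r) :
    Measurable fun ω => (isolatedCount M n r ω : ENNReal) := by
  simp only [isolatedCount_eq_tsum]
  exact Measurable.tsum fun k => Finset.measurable_sum _ fun i _ =>
    measurable_one.indicator ((M.measurableSet_noEdgeEvent hr _ _).inter (M.measurableSet_N_eq n k))

lemma lintegral_isolatedCount [IsProbabilityMeasure P] (M : Model d P) (n : ℕ) {r : ℝ}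
    (hr : 0 < r) :
    ∫⁻ ω, (isolatedCount M n r ω : ENNReal) ∂P = ∑' k : ℕ,
      k * (M.nonEdgeProb r ^ (k - 1) *
        ENNReal.ofReal (Real.exp (-(n : ℝ)) * (n : ℝ) ^ k / k.factorial)) := by
  have hm (k i : ℕ) :
      MeasurableSet (M.noEdgeEvent r i ((Finset.Icc 1 k).erase i) ∩ {ω | M.N n ω = k}) :=
    (M.measurableSet_noEdgeEvent hr _ _).inter (M.measurableSet_N_eq n k)
  simp only [isolatedCount_eq_tsum]
  rw [lintegral_tsum fun k => (Finset.measurable_sum _ fun i _ =>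
    measurable_one.indicator (hm k i)).aemeasurable]
  congr 1
  ext k
  rw [lintegral_finsetSum _ fun i _ => measurable_one.indicator (hm k i)]
  have hterm (i : ℕ) (hi : i ∈ Finset.Icc 1 k) :
      ∫⁻ ω, (M.noEdgeEvent r i ((Finset.Icc 1 k).erase i) ∩ {ω | M.N n ω = k}).indicator 1 ω ∂P =
        M.nonEdgeProb r ^ (k - 1) *
          ENNReal.ofReal (Real.exp (-(n : ℝ)) * (n : ℝ) ^ k / k.factorial) := by
    rw [lintegral_indicator_one (hm k i), M.measure_noEdgeEvent_inter hr, M.N_poisson,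
      M.measure_noEdgeEvent hr (Finset.mem_Icc.1 hi).1
        (fun j hj => (Finset.mem_Icc.1 (Finset.mem_of_mem_erase hj)).1) (Finset.notMem_erase _ _),
      Finset.card_erase_of_mem hi]
    simp
  rw [Finset.sum_congr rfl hterm]
  simp

end Model

lemma hasSum_poisson_mul_pow (a p : ℝ) :
    HasSum (fun k : ℕ => k * (p ^ (k - 1) * (Real.exp (-a) * a ^ k / k.factorial)))
      (a * Real.exp (-(a * (1 - p)))) := by
  refine (hasSum_nat_add_iff' 1).1 ?_
  have h := (NormedSpace.expSeries_div_hasSum_exp (𝔸 := ℝ) (a * p)).mul_left (a * Real.exp (-a))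
  rw [← Real.exp_eq_exp_ℝ] at h
  have hval : a * Real.exp (-a) * Real.exp (a * p) = a * Real.exp (-(a * (1 - p))) := by
    rw [mul_assoc, ← Real.exp_add]
    ring_nf
  rw [hval] at h
  simp only [Finset.range_one, Finset.sum_singleton, Nat.cast_zero, zero_mul, sub_zero]
  refine h.congr_fun fun k => ?_
  have : ((k.factorial : ℕ) : ℝ) ≠ 0 := by positivity
  have : ((k : ℝ) + 1) ≠ 0 := by positivity
  simp only [Nat.factorial_succ, Nat.add_sub_cancel]
  push_cast
  field_simp
  ring

namespace Model

open scoped Pointwise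

/-- The probability that two independent uniform points of the torus are joined. -/
def edgeProb (M : Model d P) (r : ℝ) : ℝ := ∫ y in cube d, M.g (‖y‖ / r)

lemma integrableOn_g_cube (M : Model d P) {r : ℝ} (hr : 0 < r) :
    IntegrableOn (fun y => M.g (‖y‖ / r)) (cube d) := by
  have h0 (y : EuclideanSpace ℝ (Fin d)) := M.g_mem (‖y‖ / r) (by positivity)
  refine Integrable.of_bound (C := 1)
    (M.measurable_g_comp (by fun_prop) fun y => by positivity).aestronglyMeasurable
    (ae_of_all _ fun y => ?_)
  rw [Real.norm_eq_abs, abs_of_nonneg (h0 y).1]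
  exact (h0 y).2

lemma one_sub_edgeProb (M : Model d P) {r : ℝ} (hr : 0 < r) :
    1 - M.edgeProb r = ∫ y in cube d, (1 - M.g (‖y‖ / r)) := by
  rw [integral_sub (integrable_const _) (M.integrableOn_g_cube hr), edgeProb]
  simp

lemma nonEdgeProb_eq (M : Model d P) {r : ℝ} (hr : 0 < r) :
    M.nonEdgeProb r = ENNReal.ofReal (1 - M.edgeProb r) := by
  rw [M.one_sub_edgeProb hr, nonEdgeProb, ofReal_integral_eq_lintegral_ofReal]
  · exact (integrable_const _).sub (M.integrableOn_g_cube hr)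
  · exact ae_of_all _ fun y => sub_nonneg.2 (M.g_mem (‖y‖ / r) (by positivity)).2

lemma one_sub_edgeProb_nonneg (M : Model d P) {r : ℝ} (hr : 0 < r) : 0 ≤ 1 - M.edgeProb r := by
  rw [M.one_sub_edgeProb hr]
  exact integral_nonneg fun y => sub_nonneg.2 (M.g_mem (‖y‖ / r) (by positivity)).2

lemma integral_isolatedCount [IsProbabilityMeasure P] (M : Model d P) (n : ℕ) {r : ℝ}
    (hr : 0 < r) :
    ∫ ω, (isolatedCount M n r ω : ℝ) ∂P = n * Real.exp (-(n * M.edgeProb r)) := by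
  have h := integral_toReal (M.measurable_isolatedCount n hr).aemeasurable (μ := P)
    (ae_of_all _ fun ω => ENNReal.natCast_lt_top _)
  simp only [ENNReal.toReal_natCast] at h
  have hp := M.one_sub_edgeProb_nonneg hr
  have hs := hasSum_poisson_mul_pow n (1 - M.edgeProb r)
  rw [h, M.lintegral_isolatedCount n hr, M.nonEdgeProb_eq hr]
  have hterm (k : ℕ) : (k : ENNReal) * (ENNReal.ofReal (1 - M.edgeProb r) ^ (k - 1) *
      ENNReal.ofReal (Real.exp (-(n : ℝ)) * (n : ℝ) ^ k / k.factorial)) =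
      ENNReal.ofReal (k * ((1 - M.edgeProb r) ^ (k - 1) *
        (Real.exp (-(n : ℝ)) * (n : ℝ) ^ k / k.factorial))) := by
    rw [ENNReal.ofReal_mul (by positivity), ENNReal.ofReal_mul (by positivity),
      ENNReal.ofReal_pow hp, ENNReal.ofReal_natCast]
  simp only [hterm]
  rw [← ENNReal.ofReal_tsum_of_nonneg (fun k => by positivity) hs.summable, hs.tsum_eq,
    ENNReal.toReal_ofReal (by positivity)]
  ring_nf

/-- The mass of the connection function outside the rescaled cube. -/
def tailMass (M : Model d P) (r : ℝ) : ℝ :=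
  ∫ u in (r⁻¹ • cube d)ᶜ, M.g ‖u‖

lemma edgeProb_eq (M : Model d P) {r : ℝ} (hr : 0 < r) :
    M.edgeProb r = r ^ d * (M.α - M.tailMass r) := by
  have h1 := Measure.setIntegral_comp_smul_of_pos volume
    (fun u : EuclideanSpace ℝ (Fin d) => M.g ‖u‖) (cube d) (inv_pos.2 hr)
  have h2 : M.edgeProb r = ∫ y in cube d, M.g ‖r⁻¹ • y‖ := by
    simp only [edgeProb, norm_smul, Real.norm_eq_abs, abs_of_pos (inv_pos.2 hr), div_eq_inv_mul]
  have h3 := integral_add_compl (measurableSet_cube.const_smul₀ r⁻¹) M.g_integrable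
  rw [h2, h1, tailMass, M.α_def, ← h3, add_sub_cancel_right, finrank_euclideanSpace_fin, inv_pow,
    inv_inv, smul_eq_mul]

lemma tailMass_nonneg (M : Model d P) (r : ℝ) : 0 ≤ M.tailMass r :=
  integral_nonneg fun u => (M.g_mem ‖u‖ (norm_nonneg u)).1

lemma exists_tailMass_le (M : Model d P) {c : ℝ} (hc : (d : ℝ) < c)
    (hg : M.g =o[atTop] fun r : ℝ => r ^ (-c)) :
    ∃ δ : ℝ, 0 < δ ∧ ∃ C, ∀ᶠ r in nhdsWithin 0 (Ioi 0), M.tailMass r ≤ C * r ^ δ := by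
  set δ := (c - d) / 2 with hδ
  have hδ0 : 0 < δ := by rw [hδ]; linarith
  have hcδ : 0 < c - δ := by
    have : (0 : ℝ) ≤ d := Nat.cast_nonneg d
    rw [hδ]; linarith
  have hint : Integrable fun u : EuclideanSpace ℝ (Fin d) => (1 + ‖u‖) ^ (-(c - δ)) :=
    integrable_one_add_norm (by simp only [finrank_euclideanSpace_fin]; rw [hδ]; linarith)
  obtain ⟨R, hR⟩ := eventually_atTop.1 (hg.bound zero_lt_one)
  refine ⟨δ, hδ0, 2 ^ δ * 2 ^ (c - δ) * ∫ u : EuclideanSpace ℝ (Fin d), (1 + ‖u‖) ^ (-(c - δ)), ?_⟩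
  have hev : ∀ᶠ r : ℝ in nhdsWithin 0 (Ioi 0), max R 1 ≤ r⁻¹ * (1 / 2) :=
    (tendsto_inv_nhdsGT_zero.atTop_mul_const (by norm_num : (0 : ℝ) < 1 / 2)).eventually_ge_atTop _
  filter_upwards [hev, self_mem_nhdsWithin] with r hr hr0
  rw [mem_Ioi] at hr0
  have hpt (u : EuclideanSpace ℝ (Fin d)) (hu : u ∈ (r⁻¹ • cube d)ᶜ) :
      M.g ‖u‖ ≤ (2 * r) ^ δ * (2 ^ (c - δ) * (1 + ‖u‖) ^ (-(c - δ))) := by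
    have h1 : r⁻¹ * (1 / 2) ≤ ‖u‖ := by
      rw [mem_compl_iff, Set.mem_smul_set_iff_inv_smul_mem₀ (inv_ne_zero hr0.ne'), inv_inv] at hu
      have := half_le_norm_of_notMem_cube hu
      rw [norm_smul, Real.norm_eq_abs, abs_of_pos hr0] at this
      rwa [inv_mul_le_iff₀ hr0]
    have hu1 : 1 ≤ ‖u‖ := (le_max_right _ _).trans (hr.trans h1)
    have hu0 : 0 < ‖u‖ := zero_lt_one.trans_le hu1
    have h2 := hR ‖u‖ ((le_max_left _ _).trans (hr.trans h1))
    rw [one_mul, Real.norm_eq_abs, Real.norm_eq_abs, abs_of_nonneg (Real.rpow_nonneg hu0.le _)] at h2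
    refine (le_abs_self _).trans (h2.trans ?_)
    have h3 : ‖u‖ ^ (-c) = ‖u‖⁻¹ ^ δ * ‖u‖ ^ (-(c - δ)) := by
      rw [Real.inv_rpow hu0.le, ← Real.rpow_neg hu0.le, ← Real.rpow_add hu0]
      ring_nf
    rw [h3]
    gcongr ?_ * ?_
    · refine Real.rpow_le_rpow (by positivity) ?_ hδ0.le
      rw [inv_le_comm₀ hu0 (by positivity)]
      refine le_trans (le_of_eq ?_) h1
      field_simp
    · rw [Real.rpow_neg hu0.le, Real.rpow_neg (by positivity), ← Real.inv_rpow hu0.le,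
        ← Real.inv_rpow (by positivity), ← Real.mul_rpow (by norm_num) (by positivity)]
      refine Real.rpow_le_rpow (by positivity) ?_ hcδ.le
      rw [← div_eq_mul_inv, inv_eq_one_div, div_le_div_iff₀ hu0 (by positivity)]
      linarith
  calc M.tailMass r
      ≤ ∫ u in (r⁻¹ • cube d)ᶜ, (2 * r) ^ δ * (2 ^ (c - δ) * (1 + ‖u‖) ^ (-(c - δ))) := by
        refine setIntegral_mono_on M.g_integrable.integrableOn
          ((hint.const_mul _).const_mul _).integrableOn
          (measurableSet_cube.const_smul₀ r⁻¹).compl hpt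
    _ ≤ ∫ u, (2 * r) ^ δ * (2 ^ (c - δ) * (1 + ‖u‖) ^ (-(c - δ))) :=
        setIntegral_le_integral ((hint.const_mul _).const_mul _)
          (ae_of_all _ fun u => by dsimp only [Pi.zero_apply]; positivity)
    _ = _ := by
        rw [integral_const_mul, integral_const_mul, Real.mul_rpow (by norm_num) hr0.le]
        ring

end Model

lemma tendsto_log_add_mul_rpow (b a s : ℝ) (ha : 0 < a) (hs : 0 < s) :
    Tendsto (fun n : ℕ => (Real.log n + b) * ((Real.log n + b) / (a * n)) ^ s) atTop (nhds 0) := by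
  have h1 := ((isLittleO_log_rpow_rpow_atTop (1 + s) hs).tendsto_div_nhds_zero.comp
    tendsto_natCast_atTop_atTop).const_mul (2 ^ (1 + s) / a ^ s)
  rw [mul_zero] at h1
  have hlog : Tendsto (fun n : ℕ => Real.log n) atTop atTop :=
    Real.tendsto_log_atTop.comp tendsto_natCast_atTop_atTop
  refine tendsto_of_tendsto_of_tendsto_of_le_of_le' tendsto_const_nhds h1 ?_ ?_
  · filter_upwards [hlog.eventually_ge_atTop (-b)] with n hn
    have : 0 ≤ Real.log n + b := by linarith
    positivity
  · filter_upwards [hlog.eventually_gt_atTop |b|, eventually_gt_atTop 0] with n hn hn0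
    have hL : 0 < Real.log n + b := by linarith [neg_abs_le b]
    have hlog0 : 0 < Real.log n := (abs_nonneg b).trans_lt hn
    have hn' : (0 : ℝ) < n := by exact_mod_cast hn0
    calc (Real.log n + b) * ((Real.log n + b) / (a * n)) ^ s
        ≤ (2 * Real.log n) * ((2 * Real.log n) / (a * n)) ^ s := by
          have : Real.log n + b ≤ 2 * Real.log n := by linarith [le_abs_self b]
          gcongr
      _ = _ := by
          simp only [Function.comp_apply]
          rw [Real.div_rpow (by positivity) (by positivity), Real.mul_rpow ha.le hn'.le,
            Real.mul_rpow (by norm_num) hlog0.le, Real.rpow_add (by norm_num),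
            Real.rpow_add hlog0, Real.rpow_one, Real.rpow_one]
          field_simp

lemma tendsto_log_add_div (b a : ℝ) :
    Tendsto (fun n : ℕ => (Real.log n + b) / (a * n)) atTop (nhds 0) := by
  have h1 := Real.isLittleO_log_id_atTop.tendsto_div_nhds_zero.comp
    (tendsto_natCast_atTop_atTop (R := ℝ))
  have h2 := tendsto_const_div_atTop_nhds_zero_nat b
  have h3 := (h1.add h2).const_mul a⁻¹
  simp only [add_zero, mul_zero] at h3
  refine h3.congr fun n => ?_
  simp only [Function.comp_apply, id]
  rw [← add_div, div_mul_eq_div_div_swap, div_eq_inv_mul _ a]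

/-- Proposition 1: if `g(r) = o(r^{-c})` for some `c > d` and `r_n(b)^d = (log n + b)/(α n)`,
then `E[W_n(r_n(b))] → e^{-b}`. -/
theorem expected_isolated_count_tendsto
    (hd : 2 ≤ d) [IsProbabilityMeasure P] (M : Model d P)
    {c : ℝ} (hc : (d : ℝ) < c)
    (hg : M.g =o[atTop] fun r : ℝ => r ^ (-c))
    (b : ℝ) :
    Tendsto (fun n : ℕ =>
        ∫ ω, (isolatedCount M n (((Real.log n + b) / (M.α * n)) ^ ((1 : ℝ) / d)) ω : ℝ) ∂P)
      atTop (nhds (Real.exp (-b))) := by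
  have hd0 : (d : ℝ) ≠ 0 := by positivity
  have hα := M.α_pos
  set t : ℕ → ℝ := fun n => (Real.log n + b) / (M.α * n) with ht
  have hlog : Tendsto (fun n : ℕ => Real.log n) atTop atTop :=
    Real.tendsto_log_atTop.comp tendsto_natCast_atTop_atTop
  have hLpos : ∀ᶠ n : ℕ in atTop, 0 < Real.log n + b := by
    filter_upwards [hlog.eventually_gt_atTop (-b)] with n hn
    linarith
  have htpos : ∀ᶠ n : ℕ in atTop, 0 < t n := by
    filter_upwards [hLpos, eventually_gt_atTop 0] with n hn hn0
    have : (0 : ℝ) < n := by exact_mod_cast hn0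
    positivity
  have hr : Tendsto (fun n => t n ^ ((1 : ℝ) / d)) atTop (nhdsWithin 0 (Ioi 0)) := by
    refine tendsto_nhdsWithin_iff.2 ⟨?_, htpos.mono fun n hn => Real.rpow_pos_of_pos hn _⟩
    have := (tendsto_log_add_div b M.α).rpow_const (p := (1 : ℝ) / d) (Or.inr (by positivity))
    rwa [Real.zero_rpow (by positivity)] at this
  obtain ⟨δ, hδ, C, hC⟩ := M.exists_tailMass_le hc hg
  have herr : Tendsto (fun n : ℕ => (Real.log n + b) * M.tailMass (t n ^ ((1 : ℝ) / d)))
      atTop (nhds 0) := by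
    have hlim := (tendsto_log_add_mul_rpow b M.α (1 / d * δ) hα (by positivity)).const_mul C
    rw [mul_zero] at hlim
    refine tendsto_of_tendsto_of_tendsto_of_le_of_le' tendsto_const_nhds hlim ?_ ?_
    · filter_upwards [hLpos] with n hn
      exact mul_nonneg hn.le (M.tailMass_nonneg _)
    · filter_upwards [hLpos, htpos, hr.eventually hC] with n hn htn hCn
      rw [← Real.rpow_mul htn.le] at hCn
      calc _ ≤ (Real.log n + b) * (C * t n ^ (1 / d * δ)) := by gcongr
        _ = _ := by ring
  have hexp : Tendsto (fun n : ℕ => Real.exp (-b + (Real.log n + b) *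
      M.tailMass (t n ^ ((1 : ℝ) / d)) / M.α)) atTop (nhds (Real.exp (-b))) := by
    have := (herr.div_const M.α).const_add (-b)
    rw [zero_div, add_zero] at this
    exact (Real.continuous_exp.tendsto _).comp this
  refine hexp.congr' ?_
  filter_upwards [htpos, eventually_gt_atTop 0] with n htn hn0
  have hn : (0 : ℝ) < n := by exact_mod_cast hn0
  have hrn : 0 < t n ^ ((1 : ℝ) / d) := Real.rpow_pos_of_pos htn _
  have hpow : (t n ^ ((1 : ℝ) / d)) ^ d = t n := by
    rw [one_div, Real.rpow_inv_natCast_pow htn.le (by omega)]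
  rw [M.integral_isolatedCount n hrn, M.edgeProb_eq hrn, hpow]
  nth_rw 2 [← Real.exp_log hn]
  rw [← Real.exp_add]
  congr 1
  simp only [ht]
  field_simp
  ring

end RCM
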